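/- (Error analysis of PowerBlast.) Let K ≥ 1 and D ≥ 2 be integers, P > 0, σ > 0 and S = P/σ². Set p = 2(1 − 2^{−K})·Q(√(3·S·(1 + S)^{D−2}/(2^{2K} − 1))) (the error probability of the first D − 1 rounds), and assume 0 < p < 1. Define γ = 1/(2√p) + (√p/S)·ln(2(1 − p)/p) and assume γ ≥ 0. Model the final round as follows: U is a random variable with P(U = 0) = 1 − p and P(U = 1) = P(U = −1) = p/2, N ~ N(0, σ²) is independent of U, Y = √(P/p)·U + N (unit-power normalization, since E[U²] = p), and Û is the threshold decoder with threshold t = γ·√P (i.e., Û = 0 if |Y| ≤ γ√P and Û = sign(Y) otherwise). Then: (i) t = γ√P coincides with the MAP boundary A/2 + (σ²/A)·ln(2(1 − p)/p) for amplitude A = √(P/p); and (ii) the overall error probability of the final round is P(Û ≠ U) = 2(1 − p)·Q(γ·√S) + p·Q((1/√p − γ)·√S). -/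

import Mathlib

open MeasureTheory ProbabilityTheory
open scoped ENNReal NNReal

/-- The Gaussian Q-function: `Q(x) = ∫_x^∞ (1/√(2π)) e^{-u²/2} du`. -/
noncomputable def gaussQ (x : ℝ) : ℝ :=
  ∫ u in Set.Ioi x, (1 / Real.sqrt (2 * Real.pi)) * Real.exp (-(u ^ 2) / 2)

/-!
Given `U = u`, the decoder errs exactly when the noise lands in a tail: `|N| > t` for `u = 0`,
`N ≤ t - A` for `u = 1` and `N ≥ A - t` for `u = -1`. The last two tails have equal Gaussian mass,
so only `P(U = 0)` and `P(U ≠ 0)` enter the error probability.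
-/

/-- The decision rule for the ternary final-round symbol with threshold `t`: `0` on the dead zone
`[-t, t]`, the sign of the observation `y` outside it. -/
noncomputable def thresholdDecoder (t y : ℝ) : ℝ :=
  if |y| ≤ t then 0 else if y > t then 1 else -1

section ThresholdDecoder

variable {t y : ℝ}

@[fun_prop]
lemma measurable_thresholdDecoder : Measurable (thresholdDecoder t) :=
  Measurable.ite (measurableSet_le (by fun_prop) measurable_const) measurable_const
    (Measurable.ite measurableSet_Ioi measurable_const measurable_const)

lemma thresholdDecoder_ne_zero_iff : thresholdDecoder t y ≠ 0 ↔ t < |y| := by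
  unfold thresholdDecoder
  split_ifs <;> simp_all

lemma thresholdDecoder_ne_one_iff : thresholdDecoder t y ≠ 1 ↔ y ≤ t := by
  unfold thresholdDecoder
  split_ifs <;> grind

lemma thresholdDecoder_ne_neg_one_iff (ht : 0 ≤ t) : thresholdDecoder t y ≠ -1 ↔ -t ≤ y := by
  unfold thresholdDecoder
  split_ifs <;> grind

end ThresholdDecoder

lemma gaussQ_nonneg (x : ℝ) : 0 ≤ gaussQ x :=
  integral_nonneg fun _ => by positivity

section GaussianTails

lemma gaussianReal_zero_one_Ioi (x : ℝ) :
    gaussianReal 0 1 (Set.Ioi x) = ENNReal.ofReal (gaussQ x) := by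
  rw [gaussianReal_apply_eq_integral 0 one_ne_zero]
  simp only [gaussQ, gaussianPDFReal, NNReal.coe_one, mul_one, sub_zero, one_div]

variable (m : ℝ) {v : ℝ≥0} (hv : v ≠ 0) (x : ℝ)
include hv

lemma gaussianReal_Ioi :
    gaussianReal m v (Set.Ioi x) = ENNReal.ofReal (gaussQ ((x - m) / √v)) := by
  have hsqrt : 0 < √(v : ℝ) := Real.sqrt_pos.2 (NNReal.coe_pos.2 (pos_iff_ne_zero.2 hv))
  have hstandardize : (gaussianReal m v).map (fun u => (u - m) / √v) = gaussianReal 0 1 := by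
    have hsq : NNReal.mk (√v ^ 2) (sq_nonneg _) = v := NNReal.eq (Real.sq_sqrt v.coe_nonneg)
    have hvar : v / NNReal.mk (√v ^ 2) (sq_nonneg _) = 1 := by rw [hsq, div_self hv]
    rw [← hvar, ← zero_div √(v : ℝ), ← gaussianReal_map_div_const, ← sub_self m,
      ← gaussianReal_map_sub_const, Measure.map_map (by fun_prop) (by fun_prop)]
    rfl
  rw [← gaussianReal_zero_one_Ioi, ← hstandardize,
    Measure.map_apply (by fun_prop) measurableSet_Ioi]
  congr 1
  ext u
  simp [div_lt_div_iff_of_pos_right hsqrt]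

lemma gaussianReal_Ici :
    gaussianReal m v (Set.Ici x) = ENNReal.ofReal (gaussQ ((x - m) / √v)) := by
  have := nullSingletonClass_gaussianReal (μ := m) hv
  rw [← gaussianReal_Ioi m hv, measure_congr Ioi_ae_eq_Ici]

lemma gaussianReal_Iic :
    gaussianReal m v (Set.Iic x) = ENNReal.ofReal (gaussQ ((m - x) / √v)) := by
  have hreflect := gaussianReal_map_neg (μ := -m) (v := v)
  rw [neg_neg] at hreflect
  rw [← hreflect, Measure.map_apply measurable_neg measurableSet_Iic, Set.neg_preimage,
    Set.neg_Iic, gaussianReal_Ici _ hv, neg_sub_neg]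

lemma gaussianReal_Iio :
    gaussianReal m v (Set.Iio x) = ENNReal.ofReal (gaussQ ((m - x) / √v)) := by
  have := nullSingletonClass_gaussianReal (μ := m) hv
  rw [← gaussianReal_Iic m hv, measure_congr Iio_ae_eq_Iic]

lemma gaussianReal_zero_lt_abs {t : ℝ} (ht : 0 ≤ t) :
    gaussianReal 0 v {x | t < |x|} = ENNReal.ofReal (2 * gaussQ (t / √v)) := by
  have htails : {x : ℝ | t < |x|} = Set.Ioi t ∪ Set.Iio (-t) := by
    ext x
    simp [lt_abs, lt_neg]
  have hdisj : Disjoint (Set.Ioi t) (Set.Iio (-t)) :=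
    Set.disjoint_left.2 fun x (hx : t < x) (hx' : x < -t) => by linarith
  rw [htails, measure_union hdisj measurableSet_Iio, gaussianReal_Ioi 0 hv,
    gaussianReal_Iio 0 hv, sub_zero, sub_neg_eq_add, zero_add,
    ← ENNReal.ofReal_add (gaussQ_nonneg _) (gaussQ_nonneg _), two_mul]

end GaussianTails

section TotalProbability

variable {Ω α β : Type*} [MeasurableSpace Ω] [MeasurableSpace α] [MeasurableSingletonClass α]
  [MeasurableSpace β] {μ : Measure Ω} {X : Ω → α} {s : Finset α}

lemma ae_mem_finset_of_sum_measure_preimage_singleton [IsProbabilityMeasure μ]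
    (hX : Measurable X) (hsum : ∑ x ∈ s, μ (X ⁻¹' {x}) = 1) : ∀ᵐ ω ∂μ, X ω ∈ s := by
  rw [sum_measure_preimage_singleton s fun x _ => hX (measurableSet_singleton x)] at hsum
  exact (mem_ae_iff_prob_eq_one (hX s.measurableSet)).2 hsum

lemma measure_mem_eq_sum_of_indepFun {N : Ω → β} (hX : Measurable X) (hN : Measurable N)
    (hindep : IndepFun X N μ) (hXs : ∀ᵐ ω ∂μ, X ω ∈ s)
    {E : α → Set β} (hE : ∀ x ∈ s, MeasurableSet (E x)) :
    μ {ω | N ω ∈ E (X ω)} = ∑ x ∈ s, μ (X ⁻¹' {x}) * μ.map N (E x) := by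
  have hfiber : {ω | N ω ∈ E (X ω)} =ᵐ[μ] ⋃ x ∈ s, X ⁻¹' {x} ∩ N ⁻¹' E x := by
    rw [Filter.eventuallyEq_set]
    filter_upwards [hXs] with ω hω
    simp [hω]
  have hdisj : (s : Set α).PairwiseDisjoint fun x => X ⁻¹' {x} ∩ N ⁻¹' E x :=
    (Set.pairwiseDisjoint_fiber X s).mono fun _ => Set.inter_subset_left
  rw [measure_congr hfiber, measure_biUnion_finset hdisj fun x hx =>
    (hX (measurableSet_singleton x)).inter (hN (hE x hx))]
  refine Finset.sum_congr rfl fun x hx => ?_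
  rw [hindep.measure_inter_preimage_eq_mul _ _ (measurableSet_singleton x) (hE x hx),
    Measure.map_apply hN (hE x hx)]

end TotalProbability

theorem measure_thresholdDecoder_ne {Ω : Type*} [MeasurableSpace Ω] {μ : Measure Ω}
    {U N : Ω → ℝ} (hU : Measurable U) (hN : Measurable N) (hindep : IndepFun U N μ)
    (hsupp : ∀ᵐ ω ∂μ, U ω ∈ ({0, 1, -1} : Finset ℝ))
    {v : ℝ≥0} (hv : v ≠ 0) (hlaw : μ.map N = gaussianReal 0 v) (A : ℝ) {t : ℝ} (ht : 0 ≤ t) :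
    μ {ω | thresholdDecoder t (A * U ω + N ω) ≠ U ω} =
      μ (U ⁻¹' {0}) * ENNReal.ofReal (2 * gaussQ (t / √v)) +
        (μ (U ⁻¹' {1}) + μ (U ⁻¹' {-1})) * ENNReal.ofReal (gaussQ ((A - t) / √v)) := by
  let E (u : ℝ) : Set ℝ := {n | thresholdDecoder t (A * u + n) ≠ u}
  have hE (u : ℝ) : MeasurableSet (E u) :=
    (measurableSet_eq_fun (by fun_prop) measurable_const).compl
  have hzero : E 0 = {n | t < |n|} := by
    ext n
    simp [E, thresholdDecoder_ne_zero_iff]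
  have hone : E 1 = Set.Iic (t - A) := by
    ext n
    simp [E, thresholdDecoder_ne_one_iff, le_sub_iff_add_le']
  have hneg_one : E (-1) = Set.Ici (A - t) := by
    ext n
    simp only [E, Set.mem_ofPred_eq, thresholdDecoder_ne_neg_one_iff ht, Set.mem_Ici]
    constructor <;> intro h <;> linarith
  have htotal := measure_mem_eq_sum_of_indepFun hU hN hindep hsupp fun u _ => hE u
  rw [Finset.sum_insert (by norm_num), Finset.sum_pair (by norm_num), hlaw, hzero, hone, hneg_one,
    gaussianReal_zero_lt_abs hv ht, gaussianReal_Iic 0 hv, gaussianReal_Ici 0 hv, sub_zero,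
    zero_sub, neg_sub, ← add_mul] at htotal
  exact htotal

lemma threshold_mul_sqrt_eq_mapBoundary {P p : ℝ} (hP : 0 < P) (hp : 0 < p) (σ L : ℝ) :
    (1 / (2 * √p) + √p / (P / σ ^ 2) * L) * √P = √(P / p) / 2 + σ ^ 2 / √(P / p) * L := by
  rw [Real.sqrt_div hP.le, div_div_eq_mul_div]
  field_simp
  rw [Real.sq_sqrt hP.le]
  ring

theorem powerblast_final_round_error_general
    {Ω : Type*} [MeasurableSpace Ω] (μ : Measure Ω) [IsProbabilityMeasure μ]
    {P σ : ℝ} (hP : 0 < P) (hσ : 0 < σ) {p γ : ℝ} (hp0 : 0 < p) (hp1 : p < 1)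
    (hγdef : γ = 1 / (2 * √p) + √p / (P / σ ^ 2) * Real.log (2 * (1 - p) / p))
    (hγ : 0 ≤ γ) {U N : Ω → ℝ} (hUm : Measurable U) (hNm : Measurable N)
    (hU0 : μ (U ⁻¹' {0}) = ENNReal.ofReal (1 - p))
    (hU1 : μ (U ⁻¹' {1}) = ENNReal.ofReal (p / 2))
    (hUneg : μ (U ⁻¹' {-1}) = ENNReal.ofReal (p / 2))
    (hindep : IndepFun U N μ)
    (hN : μ.map N = gaussianReal 0 (.mk (σ ^ 2) (sq_nonneg σ))) :
    γ * √P = √(P / p) / 2 + σ ^ 2 / √(P / p) * Real.log (2 * (1 - p) / p) ∧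
      μ {ω | thresholdDecoder (γ * √P) (√(P / p) * U ω + N ω) ≠ U ω} =
        ENNReal.ofReal (2 * (1 - p) * gaussQ (γ * √(P / σ ^ 2)) +
          p * gaussQ ((1 / √p - γ) * √(P / σ ^ 2))) := by
  refine ⟨hγdef ▸ threshold_mul_sqrt_eq_mapBoundary hP hp0 σ _, ?_⟩
  have hhalf_nonneg : 0 ≤ p / 2 := by positivity
  have hcompl_nonneg : 0 ≤ 1 - p := sub_nonneg.2 hp1.le
  have hmass : μ (U ⁻¹' {1}) + μ (U ⁻¹' {-1}) = ENNReal.ofReal p := by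
    rw [hU1, hUneg, ← ENNReal.ofReal_add hhalf_nonneg hhalf_nonneg, add_halves]
  have hsupp : ∀ᵐ ω ∂μ, U ω ∈ ({0, 1, -1} : Finset ℝ) := by
    refine ae_mem_finset_of_sum_measure_preimage_singleton hUm ?_
    rw [Finset.sum_insert (by norm_num), Finset.sum_pair (by norm_num), hmass, hU0,
      ← ENNReal.ofReal_add hcompl_nonneg hp0.le, sub_add_cancel, ENNReal.ofReal_one]
  have hvar : NNReal.mk (σ ^ 2) (sq_nonneg σ) ≠ 0 :=
    fun h => (pow_pos hσ 2).ne' (congrArg NNReal.toReal h)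
  have hstd : √(NNReal.mk (σ ^ 2) (sq_nonneg σ)) = σ := Real.sqrt_sq hσ.le
  have hsnr : √(P / σ ^ 2) = √P / σ := by rw [Real.sqrt_div hP.le, Real.sqrt_sq hσ.le]
  have harg0 : γ * √P / σ = γ * √(P / σ ^ 2) := by rw [hsnr, mul_div_assoc]
  have harg1 : (√(P / p) - γ * √P) / σ = (1 / √p - γ) * √(P / σ ^ 2) := by
    rw [hsnr, Real.sqrt_div hP.le]
    ring
  have hQ0 := gaussQ_nonneg (γ * √(P / σ ^ 2))
  have hQ1 := gaussQ_nonneg ((1 / √p - γ) * √(P / σ ^ 2))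
  rw [measure_thresholdDecoder_ne hUm hNm hindep hsupp hvar hN _ (by positivity), hmass, hU0,
    hstd, harg0, harg1, ← ENNReal.ofReal_mul hcompl_nonneg, ← ENNReal.ofReal_mul hp0.le,
    ← ENNReal.ofReal_add (by positivity) (by positivity), mul_left_comm, ← mul_assoc]

/-- Error analysis of the final round of PowerBlast. With
`p = 2(1 - 2^{-K})·Q(√(3·S·(1+S)^(D-2)/(2^(2K)-1)))` (error probability of the first
`D-1` rounds), `0 < p < 1`, `γ = 1/(2√p) + (√p/S)·ln(2(1-p)/p) ≥ 0`, the final round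
modeled as `Y = √(P/p)·U + N` with `U ∈ {-1, 0, 1}` distributed `{p/2, 1-p, p/2}`,
`N ~ N(0,σ²)` independent of `U`, and threshold decoder with threshold `t = γ√P`:
(i) `γ√P` coincides with the MAP boundary `A/2 + (σ²/A)·ln(2(1-p)/p)` for `A = √(P/p)`;
(ii) `P(Û ≠ U) = 2(1-p)·Q(γ·√S) + p·Q((1/√p - γ)·√S)`, with `S = P/σ²`. -/
theorem powerblast_final_round_error (K D : ℕ) (hK : 1 ≤ K) (hD : 2 ≤ D)
    {Ω : Type*} [MeasurableSpace Ω] (μ : Measure Ω) [IsProbabilityMeasure μ]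
    (P σ : ℝ) (hP : 0 < P) (hσ : 0 < σ)
    (p γ : ℝ)
    (hpdef : p = 2 * (1 - (2 : ℝ)⁻¹ ^ K) *
      gaussQ (Real.sqrt (3 * (P / σ ^ 2) * (1 + P / σ ^ 2) ^ (D - 2) / (2 ^ (2 * K) - 1))))
    (hp0 : 0 < p) (hp1 : p < 1)
    (hγdef : γ = 1 / (2 * Real.sqrt p) +
      Real.sqrt p / (P / σ ^ 2) * Real.log (2 * (1 - p) / p))
    (hγ : 0 ≤ γ)
    (U N : Ω → ℝ) (hUm : Measurable U) (hNm : Measurable N)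
    (hU0 : μ (U ⁻¹' {0}) = ENNReal.ofReal (1 - p))
    (hU1 : μ (U ⁻¹' {1}) = ENNReal.ofReal (p / 2))
    (hUneg : μ (U ⁻¹' {-1}) = ENNReal.ofReal (p / 2))
    (hindep : IndepFun U N μ)
    (hN : μ.map N = gaussianReal 0 ⟨σ ^ 2, sq_nonneg σ⟩)
    (Y Uhat : Ω → ℝ)
    (hY : Y = fun ω => Real.sqrt (P / p) * U ω + N ω)
    (hUhat : Uhat = fun ω =>
      if |Y ω| ≤ γ * Real.sqrt P then 0 else if Y ω > γ * Real.sqrt P then 1 else -1) :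
    γ * Real.sqrt P =
        Real.sqrt (P / p) / 2 +
          σ ^ 2 / Real.sqrt (P / p) * Real.log (2 * (1 - p) / p) ∧
      μ {ω | Uhat ω ≠ U ω} =
        ENNReal.ofReal (2 * (1 - p) * gaussQ (γ * Real.sqrt (P / σ ^ 2)) +
          p * gaussQ ((1 / Real.sqrt p - γ) * Real.sqrt (P / σ ^ 2))) := by
  subst hY hUhat
  exact powerblast_final_round_error_general μ hP hσ hp0 hp1 hγdef hγ hUm hNm hU0 hU1 hUneg
    hindep hN
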